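/- arXiv:math-ph/0305046 — 2 statements merged into one kernel-verified Lean document; each statement's English description precedes it below -/
import Mathlib

section
/- Let b₁, b₂, b₃ ∈ ℂ and let Ω := {x ∈ ℝ³ : x₁ ≠ b₁ wherever needed, i.e. x_k − b_k ≠ 0 for k = 1,2,3} (interpreting x_k − b_k ∈ ℂ). Define α(x) = (x₁ − b₁)⁻¹e₁ + (x₂ − b₂)⁻¹e₂ + (x₃ − b₃)⁻¹e₃. Then on Ω: (i) Dα + α² = 0 (i.e. the potential v₀ = −Dα − α² vanishes identically); (ii) the potentials v_k = −Dα^{(k)} − α² are v₁ = 2((x₂−b₂)⁻² + (x₃−b₃)⁻²), v₂ = 2((x₁−b₁)⁻² + (x₃−b₃)⁻²), v₃ = 2((x₁−b₁)⁻² + (x₂−b₂)⁻²); and (iii) consequently for every harmonic scalar function g₀ : Ω → ℂ (Δg₀ = 0), the function f := Dg₀ − g₀α satisfies Df + fα = 0 on Ω. -/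
/-!
Two facts about `D` carry the argument: `D² = -Δ`, and `D(gα) = (Dg)α + g Dα` for scalar `g`.
They give `(D + M^α)(D - α)g = -Δg - g(Dα + α²)`, where `M^α` is right multiplication by `α`; so
once `α` solves the Riccati equation `Dα + α² = 0`, every harmonic `g` yields a solution
`f = Dg - gα` of `Df + fα = 0`.

For a diagonal field `α = Σ u_k(x_k) e_k` one has `Dα = -Σ u_k'` and `α² = -Σ u_k²`, and
`u_k = (x_k - b_k)⁻¹` solves `u_k' = -u_k²`. The involution `α ↦ α^{(k)}` flips the signs of the
two components other than `u_k`, so their contributions to `-Dα^{(k)} - α²` double instead of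
cancelling.
-/

noncomputable section

abbrev HC := Quaternion ℂ

def e1 : HC := ⟨0, 1, 0, 0⟩
def e2 : HC := ⟨0, 0, 1, 0⟩
def e3 : HC := ⟨0, 0, 0, 1⟩

def pd (k : Fin 3) (g : (Fin 3 → ℝ) → ℂ) (x : Fin 3 → ℝ) : ℂ :=
  fderiv ℝ g x (Pi.single k 1)

def lap (g : (Fin 3 → ℝ) → ℂ) (x : Fin 3 → ℝ) : ℂ :=
  pd 0 (pd 0 g) x + pd 1 (pd 1 g) x + pd 2 (pd 2 g) x

def pdq (k : Fin 3) (f : (Fin 3 → ℝ) → HC) (x : Fin 3 → ℝ) : HC :=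
  ⟨pd k (fun y => (f y).re) x, pd k (fun y => (f y).imI) x,
   pd k (fun y => (f y).imJ) x, pd k (fun y => (f y).imK) x⟩

def Dq (f : (Fin 3 → ℝ) → HC) (x : Fin 3 → ℝ) : HC :=
  e1 * pdq 0 f x + e2 * pdq 1 f x + e3 * pdq 2 f x

def lapq (f : (Fin 3 → ℝ) → HC) (x : Fin 3 → ℝ) : HC :=
  ⟨lap (fun y => (f y).re) x, lap (fun y => (f y).imI) x,
   lap (fun y => (f y).imJ) x, lap (fun y => (f y).imK) x⟩

def QDiffOn (f : (Fin 3 → ℝ) → HC) (Ω : Set (Fin 3 → ℝ)) : Prop :=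
  DifferentiableOn ℝ (fun y => (f y).re) Ω ∧ DifferentiableOn ℝ (fun y => (f y).imI) Ω ∧
  DifferentiableOn ℝ (fun y => (f y).imJ) Ω ∧ DifferentiableOn ℝ (fun y => (f y).imK) Ω

def QC2On (f : (Fin 3 → ℝ) → HC) (Ω : Set (Fin 3 → ℝ)) : Prop :=
  ContDiffOn ℝ 2 (fun y => (f y).re) Ω ∧ ContDiffOn ℝ 2 (fun y => (f y).imI) Ω ∧
  ContDiffOn ℝ 2 (fun y => (f y).imJ) Ω ∧ ContDiffOn ℝ 2 (fun y => (f y).imK) Ω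


/-- Build a biquaternion from its four complex components. -/
def quat (a b c d : ℂ) : HC := ⟨a, b, c, d⟩

/-- The basis `e₀ = 1, e₁, e₂, e₃`. -/
def ee : Fin 4 → HC := ![1, e1, e2, e3]

/-- The `k`-th complex component of a biquaternion. -/
def qc (k : Fin 4) (q : HC) : ℂ := ![q.re, q.imI, q.imJ, q.imK] k

/-- The involution `q^{(k)} = e_k q ē_k` (for `k = 0` this is the identity,
for `k = 1,2,3` it is `−e_k q e_k`). -/
def invol (k : Fin 4) (q : HC) : HC := if k = 0 then q else -(ee k * q * ee k)

section Components

variable (a b c d : ℂ)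

@[simp] theorem quat_re : (quat a b c d).re = a := rfl

@[simp] theorem quat_imI : (quat a b c d).imI = b := rfl

@[simp] theorem quat_imJ : (quat a b c d).imJ = c := rfl

@[simp] theorem quat_imK : (quat a b c d).imK = d := rfl

theorem e1_eq_quat : e1 = quat 0 1 0 0 := rfl

theorem e2_eq_quat : e2 = quat 0 0 1 0 := rfl

theorem e3_eq_quat : e3 = quat 0 0 0 1 := rfl

theorem pdq_eq_quat (k : Fin 3) (f : (Fin 3 → ℝ) → HC) (x : Fin 3 → ℝ) :
    pdq k f x = quat (pd k (fun y => (f y).re) x) (pd k (fun y => (f y).imI) x)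
      (pd k (fun y => (f y).imJ) x) (pd k (fun y => (f y).imK) x) :=
  rfl

end Components

theorem hasFDerivAt_comp_apply {ι E : Type*} [Finite ι] [NormedAddCommGroup E] [NormedSpace ℝ E]
    {φ : ℝ → E} {φ' : E} {j : ι} {x : ι → ℝ} (hφ : HasDerivAt φ φ' (x j)) :
    HasFDerivAt (fun y : ι → ℝ => φ (y j))
      ((ContinuousLinearMap.proj j : (ι → ℝ) →L[ℝ] ℝ).smulRight φ') x := by
  have := Fintype.ofFinite ι
  exact (hφ.hasFDerivAt.comp x (hasFDerivAt_apply j x)).congr_fderiv (by ext; simp)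

theorem differentiableAt_fderiv {𝕜 E F : Type*} [NontriviallyNormedField 𝕜]
    [NormedAddCommGroup E] [NormedSpace 𝕜 E] [NormedAddCommGroup F] [NormedSpace 𝕜 F]
    {u : E → F} {x : E} (hu : ContDiffAt 𝕜 2 u x) : DifferentiableAt 𝕜 (fderiv 𝕜 u) x :=
  (hu.fderiv_right (m := 1) (by norm_num)).differentiableAt one_ne_zero

section PartialDerivative

variable (k : Fin 3) {u v : (Fin 3 → ℝ) → ℂ} {x : Fin 3 → ℝ}

theorem pd_const (c : ℂ) (x : Fin 3 → ℝ) : pd k (fun _ => c) x = 0 := by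
  simp [pd]

theorem pd_add (hu : DifferentiableAt ℝ u x) (hv : DifferentiableAt ℝ v x) :
    pd k (fun y => u y + v y) x = pd k u x + pd k v x := by
  simp [pd, fderiv_fun_add hu hv]

theorem pd_sub (hu : DifferentiableAt ℝ u x) (hv : DifferentiableAt ℝ v x) :
    pd k (fun y => u y - v y) x = pd k u x - pd k v x := by
  simp [pd, fderiv_fun_sub hu hv]

theorem pd_mul (hu : DifferentiableAt ℝ u x) (hv : DifferentiableAt ℝ v x) :
    pd k (fun y => u y * v y) x = pd k u x * v x + u x * pd k v x := by
  simp only [pd, fderiv_fun_mul hu hv, add_apply, smul_apply, smul_eq_mul]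
  ring

theorem pd_comp_apply {φ : ℝ → ℂ} {φ' : ℂ} {j : Fin 3} (hφ : HasDerivAt φ φ' (x j)) :
    pd k (fun y => φ (y j)) x = if j = k then φ' else 0 := by
  rw [pd, (hasFDerivAt_comp_apply hφ).fderiv]
  simp [Pi.single_apply]

theorem differentiableAt_pd (hu : ContDiffAt ℝ 2 u x) : DifferentiableAt ℝ (pd k u) x :=
  (differentiableAt_fderiv hu).clm_apply (differentiableAt_const _)

theorem pd_pd (j : Fin 3) (hu : ContDiffAt ℝ 2 u x) :
    pd j (pd k u) x = fderiv ℝ (fderiv ℝ u) x (Pi.single j 1) (Pi.single k 1) := by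
  change fderiv ℝ (fun y => fderiv ℝ u y (Pi.single k 1)) x (Pi.single j 1) = _
  simp [fderiv_clm_apply (differentiableAt_fderiv hu) (differentiableAt_const _)]

theorem pd_comm (j : Fin 3) (hu : ContDiffAt ℝ 2 u x) : pd j (pd k u) x = pd k (pd j u) x := by
  rw [pd_pd k j hu, pd_pd j k hu]
  exact hu.isSymmSndFDerivAt (by simp) _ _

end PartialDerivative

/-- Real differentiability at a point of a biquaternion-valued function, componentwise because
`Quaternion ℂ` carries no norm in Mathlib. The pointwise form of `QDiffOn`. -/
structure QDiffAt (f : (Fin 3 → ℝ) → HC) (x : Fin 3 → ℝ) : Prop where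
  re : DifferentiableAt ℝ (fun y => (f y).re) x
  imI : DifferentiableAt ℝ (fun y => (f y).imI) x
  imJ : DifferentiableAt ℝ (fun y => (f y).imJ) x
  imK : DifferentiableAt ℝ (fun y => (f y).imK) x

/-- A biquaternion-valued function is twice continuously differentiable near a point,
componentwise. The pointwise form of `QC2On`. -/
structure QC2At (f : (Fin 3 → ℝ) → HC) (x : Fin 3 → ℝ) : Prop where
  re : ContDiffAt ℝ 2 (fun y => (f y).re) x
  imI : ContDiffAt ℝ 2 (fun y => (f y).imI) x
  imJ : ContDiffAt ℝ 2 (fun y => (f y).imJ) x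
  imK : ContDiffAt ℝ 2 (fun y => (f y).imK) x

section BiquaternionDerivative

variable {f h : (Fin 3 → ℝ) → HC} {g : (Fin 3 → ℝ) → ℂ} {x : Fin 3 → ℝ}

theorem QDiffAt.const (q : HC) (x : Fin 3 → ℝ) : QDiffAt (fun _ => q) x := by
  constructor <;> exact differentiableAt_const _

theorem QDiffAt.coe (hg : DifferentiableAt ℝ g x) : QDiffAt (fun y => (g y : HC)) x :=
  ⟨hg, differentiableAt_const 0, differentiableAt_const 0, differentiableAt_const 0⟩

theorem QC2At.coe (hg : ContDiffAt ℝ 2 g x) : QC2At (fun y => (g y : HC)) x :=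
  ⟨hg, contDiffAt_const, contDiffAt_const, contDiffAt_const⟩

theorem QDiffAt.add (hf : QDiffAt f x) (hh : QDiffAt h x) : QDiffAt (fun y => f y + h y) x :=
  ⟨hf.re.add hh.re, hf.imI.add hh.imI, hf.imJ.add hh.imJ, hf.imK.add hh.imK⟩

theorem QDiffAt.mul (hf : QDiffAt f x) (hh : QDiffAt h x) : QDiffAt (fun y => f y * h y) x := by
  obtain ⟨hf₀, hf₁, hf₂, hf₃⟩ := hf
  obtain ⟨hh₀, hh₁, hh₂, hh₃⟩ := hh
  constructor <;>
    simp only [Quaternion.re_mul, Quaternion.imI_mul, Quaternion.imJ_mul, Quaternion.imK_mul] <;>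
    fun_prop

theorem QC2At.qDiffAt_pdq (hf : QC2At f x) (k : Fin 3) : QDiffAt (pdq k f) x :=
  ⟨differentiableAt_pd k hf.re, differentiableAt_pd k hf.imI, differentiableAt_pd k hf.imJ,
    differentiableAt_pd k hf.imK⟩

theorem QC2At.qDiffAt_Dq (hf : QC2At f x) : QDiffAt (Dq f) x :=
  (((QDiffAt.const e1 x).mul (hf.qDiffAt_pdq 0)).add
    ((QDiffAt.const e2 x).mul (hf.qDiffAt_pdq 1))).add
    ((QDiffAt.const e3 x).mul (hf.qDiffAt_pdq 2))

theorem pdq_const (k : Fin 3) (q : HC) (x : Fin 3 → ℝ) : pdq k (fun _ => q) x = 0 := by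
  ext <;> exact pd_const k _ x

theorem pdq_coe (k : Fin 3) (g : (Fin 3 → ℝ) → ℂ) (x : Fin 3 → ℝ) :
    pdq k (fun y => (g y : HC)) x = (pd k g x : HC) := by
  ext
  · rfl
  all_goals exact pd_const k 0 x

theorem pdq_add (k : Fin 3) (hf : QDiffAt f x) (hh : QDiffAt h x) :
    pdq k (fun y => f y + h y) x = pdq k f x + pdq k h x := by
  ext
  · exact pd_add k hf.re hh.re
  · exact pd_add k hf.imI hh.imI
  · exact pd_add k hf.imJ hh.imJ
  · exact pd_add k hf.imK hh.imK

theorem pdq_sub (k : Fin 3) (hf : QDiffAt f x) (hh : QDiffAt h x) :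
    pdq k (fun y => f y - h y) x = pdq k f x - pdq k h x := by
  ext
  · exact pd_sub k hf.re hh.re
  · exact pd_sub k hf.imI hh.imI
  · exact pd_sub k hf.imJ hh.imJ
  · exact pd_sub k hf.imK hh.imK

theorem pdq_mul (k : Fin 3) (hf : QDiffAt f x) (hh : QDiffAt h x) :
    pdq k (fun y => f y * h y) x = pdq k f x * h x + f x * pdq k h x := by
  obtain ⟨hf₀, hf₁, hf₂, hf₃⟩ := hf
  obtain ⟨hh₀, hh₁, hh₂, hh₃⟩ := hh
  ext <;>
    simp (disch := fun_prop) only [pdq_eq_quat, quat_re, quat_imI, quat_imJ, quat_imK,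
      Quaternion.re_mul, Quaternion.imI_mul, Quaternion.imJ_mul, Quaternion.imK_mul,
      Quaternion.re_add, Quaternion.imI_add, Quaternion.imJ_add, Quaternion.imK_add,
      pd_add, pd_sub, pd_mul] <;>
    ring

theorem pdq_const_mul (k : Fin 3) (q : HC) (hf : QDiffAt f x) :
    pdq k (fun y => q * f y) x = q * pdq k f x := by
  rw [pdq_mul k (QDiffAt.const q x) hf, pdq_const, zero_mul, zero_add]

theorem pdq_comm (j k : Fin 3) (hf : QC2At f x) : pdq j (pdq k f) x = pdq k (pdq j f) x := by
  ext
  · exact pd_comm k j hf.re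
  · exact pd_comm k j hf.imI
  · exact pd_comm k j hf.imJ
  · exact pd_comm k j hf.imK

theorem pdq_Dq (k : Fin 3) (hf : QC2At f x) :
    pdq k (Dq f) x =
      e1 * pdq k (pdq 0 f) x + e2 * pdq k (pdq 1 f) x + e3 * pdq k (pdq 2 f) x := by
  have h₀ := hf.qDiffAt_pdq 0
  have h₁ := hf.qDiffAt_pdq 1
  have h₂ := hf.qDiffAt_pdq 2
  have he₀ := (QDiffAt.const e1 x).mul h₀
  have he₁ := (QDiffAt.const e2 x).mul h₁
  have he₂ := (QDiffAt.const e3 x).mul h₂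
  change pdq k (fun y => e1 * pdq 0 f y + e2 * pdq 1 f y + e3 * pdq 2 f y) x = _
  rw [pdq_add k (he₀.add he₁) he₂, pdq_add k he₀ he₁, pdq_const_mul k e1 h₀,
    pdq_const_mul k e2 h₁, pdq_const_mul k e3 h₂]

theorem lapq_eq_pdq_pdq (f : (Fin 3 → ℝ) → HC) (x : Fin 3 → ℝ) :
    lapq f x = pdq 0 (pdq 0 f) x + pdq 1 (pdq 1 f) x + pdq 2 (pdq 2 f) x :=
  rfl

theorem lapq_coe (g : (Fin 3 → ℝ) → ℂ) (x : Fin 3 → ℝ) :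
    lapq (fun y => (g y : HC)) x = (lap g x : HC) := by
  have hpdq (k : Fin 3) : pdq k (fun y => (g y : HC)) = fun y => (pd k g y : HC) :=
    funext (pdq_coe k g)
  simp only [lapq_eq_pdq_pdq, hpdq, pdq_coe, lap, Quaternion.coe_add]

theorem Dq_Dq (hf : QC2At f x) : Dq (Dq f) x = -lapq f x := by
  rw [Dq, pdq_Dq 0 hf, pdq_Dq 1 hf, pdq_Dq 2 hf, pdq_comm 1 0 hf, pdq_comm 2 0 hf,
    pdq_comm 2 1 hf, lapq_eq_pdq_pdq]
  ext <;> simp [e1_eq_quat, e2_eq_quat, e3_eq_quat] <;> ring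

theorem Dq_sub (hf : QDiffAt f x) (hh : QDiffAt h x) :
    Dq (fun y => f y - h y) x = Dq f x - Dq h x := by
  simp only [Dq, pdq_sub _ hf hh, mul_sub]
  abel

theorem Dq_coe_mul (hg : DifferentiableAt ℝ g x) (hf : QDiffAt f x) :
    Dq (fun y => (g y : HC) * f y) x =
      Dq (fun y => (g y : HC)) x * f x + (g x : HC) * Dq f x := by
  have mul_coe_mul (q r : HC) (c : ℂ) : q * ((c : HC) * r) = c * (q * r) := by
    rw [← mul_assoc, ← Quaternion.coe_commutes, mul_assoc]
  simp only [Dq, pdq_mul _ (QDiffAt.coe hg) hf, mul_add, add_mul, mul_coe_mul, mul_assoc]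
  abel

theorem Dq_sub_coe_mul_add_mul {α : (Fin 3 → ℝ) → HC} (hg : ContDiffAt ℝ 2 g x)
    (hα : QDiffAt α x) :
    Dq (fun y => Dq (fun z => (g z : HC)) y - (g y : HC) * α y) x +
        (Dq (fun z => (g z : HC)) x - (g x : HC) * α x) * α x =
      -(lap g x : HC) - (g x : HC) * (Dq α x + α x * α x) := by
  have hg₁ : DifferentiableAt ℝ g x := hg.differentiableAt two_ne_zero
  rw [Dq_sub (QC2At.coe hg).qDiffAt_Dq ((QDiffAt.coe hg₁).mul hα), Dq_coe_mul hg₁ hα,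
    Dq_Dq (QC2At.coe hg), lapq_coe, sub_mul, mul_add, mul_assoc]
  abel

end BiquaternionDerivative

/-- The diagonal vector field `Σ u_k(x_k) e_k`, whose `k`-th component depends on `x_k` only. -/
def diagField (u : Fin 3 → ℝ → ℂ) (x : Fin 3 → ℝ) : HC :=
  quat 0 (u 0 (x 0)) (u 1 (x 1)) (u 2 (x 2))

section DiagonalField

variable {u : Fin 3 → ℝ → ℂ} {u' : Fin 3 → ℂ} {x : Fin 3 → ℝ}

theorem diagField_mul_self (u : Fin 3 → ℝ → ℂ) (x : Fin 3 → ℝ) :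
    diagField u x * diagField u x = ((-∑ j, u j (x j) ^ 2 : ℂ) : HC) := by
  ext <;> simp [diagField, Fin.sum_univ_three, -Quaternion.coe_neg, -Quaternion.coe_add,
    -Quaternion.coe_pow] <;> ring

theorem invol_succ_diagField (k : Fin 3) (u : Fin 3 → ℝ → ℂ) (x : Fin 3 → ℝ) :
    invol k.succ (diagField u x) = diagField (fun j => if j = k then u j else -u j) x := by
  fin_cases k <;> ext <;> simp [invol, ee, e1_eq_quat, e2_eq_quat, e3_eq_quat, diagField]

theorem qDiffAt_diagField (hu : ∀ j, HasDerivAt (u j) (u' j) (x j)) :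
    QDiffAt (diagField u) x :=
  ⟨differentiableAt_const 0, (hasFDerivAt_comp_apply (hu 0)).differentiableAt,
    (hasFDerivAt_comp_apply (hu 1)).differentiableAt,
    (hasFDerivAt_comp_apply (hu 2)).differentiableAt⟩

theorem pdq_diagField (k : Fin 3) (hu : ∀ j, HasDerivAt (u j) (u' j) (x j)) :
    pdq k (diagField u) x = quat 0 (if 0 = k then u' 0 else 0) (if 1 = k then u' 1 else 0)
      (if 2 = k then u' 2 else 0) := by
  ext
  · exact pd_const k 0 x
  · exact pd_comp_apply k (hu 0)
  · exact pd_comp_apply k (hu 1)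
  · exact pd_comp_apply k (hu 2)

theorem Dq_diagField (hu : ∀ j, HasDerivAt (u j) (u' j) (x j)) :
    Dq (diagField u) x = ((-∑ j, u' j : ℂ) : HC) := by
  simp only [Dq, pdq_diagField _ hu]
  ext <;> simp [e1_eq_quat, e2_eq_quat, e3_eq_quat, Fin.sum_univ_three]
  ring

theorem Dq_diagField_add_mul_self (hu : ∀ j, HasDerivAt (u j) (-u j (x j) ^ 2) (x j)) :
    Dq (diagField u) x + diagField u x * diagField u x = 0 := by
  rw [Dq_diagField hu, diagField_mul_self, ← Quaternion.coe_add]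
  simp

theorem neg_Dq_invol_diagField_sub_mul_self (k : Fin 3)
    (hu : ∀ j, HasDerivAt (u j) (-u j (x j) ^ 2) (x j)) :
    -Dq (fun y => invol k.succ (diagField u y)) x - diagField u x * diagField u x =
      ((2 * ∑ j ∈ {k}ᶜ, u j (x j) ^ 2 : ℂ) : HC) := by
  have hflip (j : Fin 3) : HasDerivAt (if j = k then u j else -u j)
      (if j = k then -u j (x j) ^ 2 else u j (x j) ^ 2) (x j) := by
    split_ifs
    · exact hu j
    · simpa using (hu j).neg
  simp only [invol_succ_diagField]
  rw [Dq_diagField hflip, diagField_mul_self, ← Quaternion.coe_neg, ← Quaternion.coe_sub,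
    Quaternion.coe_inj, Fintype.sum_eq_add_sum_compl k, Fintype.sum_eq_add_sum_compl k]
  have hcompl : ∑ j ∈ {k}ᶜ, (if j = k then -u j (x j) ^ 2 else u j (x j) ^ 2) =
      ∑ j ∈ {k}ᶜ, u j (x j) ^ 2 :=
    Finset.sum_congr rfl fun j hj => if_neg (by simpa using hj)
  rw [hcompl, if_pos rfl]
  ring

end DiagonalField

theorem hasDerivAt_inv_ofReal_sub {b : ℂ} {t : ℝ} (h : (t : ℂ) - b ≠ 0) :
    HasDerivAt (fun s : ℝ => ((s : ℂ) - b)⁻¹) (-((t : ℂ) - b)⁻¹ ^ 2) t := by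
  simpa [neg_div] using (Complex.ofRealCLM.hasDerivAt.sub_const b).fun_inv h

theorem isOpen_setOf_ofReal_apply_sub_ne_zero {ι : Type*} (j : ι) (b : ℂ) :
    IsOpen {x : ι → ℝ | (x j : ℂ) - b ≠ 0} :=
  isOpen_ne_fun (by fun_prop) continuous_const

/-- Example 1 of the paper: for `α = Σ (x_k − b_k)⁻¹ e_k` on the set
where all `x_k − b_k ≠ 0`: (i) `Dα + α² = 0`; (ii) the potentials
`v_k = −Dα^{(k)} − α²` are the explicit ones given in the paper; (iii) for any harmonic
`g₀`, the function `f = Dg₀ − g₀α` solves `Df + fα = 0`. -/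
theorem example_inverse_linear_alpha (b1 b2 b3 : ℂ) :
    (let Ω : Set (Fin 3 → ℝ) :=
       {x | ((x 0 : ℂ) - b1 ≠ 0) ∧ ((x 1 : ℂ) - b2 ≠ 0) ∧ ((x 2 : ℂ) - b3 ≠ 0)}
     let α : (Fin 3 → ℝ) → HC := fun x =>
       quat 0 (((x 0 : ℂ) - b1)⁻¹) (((x 1 : ℂ) - b2)⁻¹) (((x 2 : ℂ) - b3)⁻¹)
     -- (i): the Riccati equation holds with v₀ = 0
     (∀ x ∈ Ω, Dq α x + α x * α x = 0) ∧
     -- (ii): the potentials v₁, v₂, v₃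
     (∀ x ∈ Ω, -Dq (fun y => invol 1 (α y)) x - α x * α x =
        ((2 * ((((x 1 : ℂ) - b2)⁻¹) ^ 2 + (((x 2 : ℂ) - b3)⁻¹) ^ 2) : ℂ) : HC)) ∧
     (∀ x ∈ Ω, -Dq (fun y => invol 2 (α y)) x - α x * α x =
        ((2 * ((((x 0 : ℂ) - b1)⁻¹) ^ 2 + (((x 2 : ℂ) - b3)⁻¹) ^ 2) : ℂ) : HC)) ∧
     (∀ x ∈ Ω, -Dq (fun y => invol 3 (α y)) x - α x * α x =
        ((2 * ((((x 0 : ℂ) - b1)⁻¹) ^ 2 + (((x 1 : ℂ) - b2)⁻¹) ^ 2) : ℂ) : HC)) ∧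
     -- (iii): harmonic functions generate solutions of Df + fα = 0
     (∀ g0 : (Fin 3 → ℝ) → ℂ, ContDiffOn ℝ 2 g0 Ω → (∀ x ∈ Ω, lap g0 x = 0) →
        ∀ x ∈ Ω,
          Dq (fun y => Dq (fun z => ((g0 z : ℂ) : HC)) y - ((g0 y : ℂ) : HC) * α y) x +
            (Dq (fun z => ((g0 z : ℂ) : HC)) x - ((g0 x : ℂ) : HC) * α x) * α x = 0)) := by
  intro Ω α
  let u : Fin 3 → ℝ → ℂ := fun k t => ((t : ℂ) - ![b1, b2, b3] k)⁻¹
  have hα : α = diagField u := rfl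
  have hΩ : IsOpen Ω := (isOpen_setOf_ofReal_apply_sub_ne_zero 0 b1).inter
    ((isOpen_setOf_ofReal_apply_sub_ne_zero 1 b2).inter
      (isOpen_setOf_ofReal_apply_sub_ne_zero 2 b3))
  have hu : ∀ x ∈ Ω, ∀ j, HasDerivAt (u j) (-u j (x j) ^ 2) (x j) := by
    rintro x ⟨h₁, h₂, h₃⟩ j
    refine hasDerivAt_inv_ofReal_sub ?_
    fin_cases j <;> assumption
  have riccati : ∀ x ∈ Ω, Dq α x + α x * α x = 0 :=
    hα ▸ fun x hx => Dq_diagField_add_mul_self (hu x hx)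
  have potential : ∀ k : Fin 3, ∀ x ∈ Ω, -Dq (fun y => invol k.succ (α y)) x - α x * α x =
      ((2 * ∑ j ∈ {k}ᶜ, u j (x j) ^ 2 : ℂ) : HC) :=
    hα ▸ fun k x hx => neg_Dq_invol_diagField_sub_mul_self k (hu x hx)
  refine ⟨riccati, fun x hx => ?_, fun x hx => ?_, fun x hx => ?_, fun g hg hlap x hx => ?_⟩
  · simpa [show ({0}ᶜ : Finset (Fin 3)) = {1, 2} from rfl, u] using potential 0 x hx
  · simpa [show ({1}ᶜ : Finset (Fin 3)) = {0, 2} from rfl, u] using potential 1 x hx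
  · simpa [show ({2}ᶜ : Finset (Fin 3)) = {0, 1} from rfl, u] using potential 2 x hx
  · have hαx : QDiffAt α x := hα ▸ qDiffAt_diagField (hu x hx)
    rw [Dq_sub_coe_mul_add_mul (hg.contDiffAt (hΩ.mem_nhds hx)) hαx, riccati x hx, hlap x hx]
    simp
end
end

section
/- Let Ω ⊆ ℝ³ be open, let α₁ : Ω → ℂ be continuously differentiable with ∂₁α₁ = 0 (i.e. α₁ = α₁(x₂,x₃)), let α₂, α₃ ∈ ℂ be constants, and set α(x) = α₁(x)e₁ + α₂e₂ + α₃e₃, ∇α₁ = (∂₂α₁)e₂ + (∂₃α₁)e₃, and Dα = e₂(∂₂α₁)e₁ + e₃(∂₃α₁)e₁. Define the operator Π by Πu := ½(u + ie₁u + e₁ue₁ + iue₁). Then: (i) Π∘Π = I, i.e. Π(Πu) = u for every u : Ω → ℍ(ℂ); and (ii) a twice differentiable u : Ω → ℍ(ℂ) satisfies −Δu − α²u + (Dα)e₁ue₁ = 0 on Ω if and only if v := Πu satisfies −Δv − α²v + i(∇α₁)v = 0 on Ω. -/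
noncomputable section

/-- The operator `Π u = ½(u + ie₁u + e₁ue₁ + iue₁)` (pointwise on biquaternions). -/
def PiOp (q : HC) : HC :=
  (2⁻¹ : ℂ) • (q + (Complex.I : HC) * e1 * q + e1 * q * e1 + (Complex.I : HC) * q * e1)

/-!
Put `p = i e₁`, so that `p² = 1` and `Π q = ½(q + p q + q p - p q p)`. Left and right
multiplication by `p` are commuting involutions `a`, `b`, and `½(1 + a + b - a b)` squares to `1`
for any such pair. With `g = (∂₂α₁) e₂ + (∂₃α₁) e₃` one has `(Dα) e₁ u e₁ = i g u p`. Since `g`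
anticommutes with `p`, `Π (g u p) = g (Π u)`, so `Π` carries the potential term of (ABC) to that
of (ABC+1). It commutes with `Δ` and with complex scalars because it is a constant ℂ-linear map,
so it carries the whole left-hand side of (ABC) to that of (ABC+1).
-/

section PeirceReflection

variable {R A : Type*} [CommRing R] [Ring A] [Algebra R A]

theorem smul_mul_smul_self_eq_one {i : R} {e : A} (hi : i * i = -1) (he : e * e = -1) :
    i • e * i • e = 1 := by
  rw [smul_mul_smul_comm, hi, he, neg_smul, one_smul, neg_neg]

variable [Invertible (2 : R)]

variable (R) in
/-- For `p² = 1`, the reflection of the algebra acting as `-1` on `{q | p q = q p = -q}` and as `1`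
on the other three joint eigenspaces of left and right multiplication by `p`. The operator `Π` is
the case `p = i e₁`. -/
def peirceReflection (p : A) : A →ₗ[R] A :=
  (⅟2 : R) • (LinearMap.id + LinearMap.mulLeft R p + LinearMap.mulRight R p -
    LinearMap.mulLeftRight R (p, p))

theorem peirceReflection_apply (p q : A) :
    peirceReflection R p q = (⅟2 : R) • (q + p * q + q * p - p * q * p) := by
  simp [peirceReflection]

theorem peirceReflection_involutive {p : A} (hp : p * p = 1) :
    Function.Involutive (peirceReflection R p) := by
  intro q
  have hp_left (a : A) : p * (p * a) = a := by rw [← mul_assoc, hp, one_mul]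
  have four_smul : q + p * q + q * p - p * q * p + p * (q + p * q + q * p - p * q * p) +
      (q + p * q + q * p - p * q * p) * p - p * (q + p * q + q * p - p * q * p) * p =
      (2 * 2 : R) • q := by
    simp only [mul_add, add_mul, mul_sub, sub_mul, mul_assoc, hp, hp_left, mul_one]
    module
  simp only [peirceReflection_apply, mul_smul_comm, smul_mul_assoc, ← smul_add, ← smul_sub,
    four_smul, smul_smul, invOf_mul_cancel_left', invOf_mul_self, one_smul]

theorem peirceReflection_mul_mul {p g : A} (hp : p * p = 1) (hg : p * g = -(g * p)) (q : A) :
    peirceReflection R p (g * q * p) = g * peirceReflection R p q := by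
  have hg_left (a : A) : p * (g * a) = -(g * (p * a)) := by
    rw [← mul_assoc, hg, neg_mul, mul_assoc]
  simp only [peirceReflection_apply, mul_smul_comm, mul_add, mul_sub, mul_assoc, neg_mul, hg_left,
    hp, mul_one]
  congr 1
  abel

variable {i : R} {e : A}

theorem peirceReflection_smul_apply (hi : i * i = -1) (q : A) :
    peirceReflection R (i • e) q =
      (⅟2 : R) • (q + i • e * q + e * q * e + i • q * e) := by
  simp only [peirceReflection_apply, smul_mul_assoc, mul_smul_comm, smul_smul, hi]
  module

theorem peirceReflection_potential (hi : i * i = -1) (he : e * e = -1) {g : A}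
    (hg : e * g = -(g * e)) (q : A) :
    peirceReflection R (i • e) (g * e * (e * q * e)) =
      i • (g * peirceReflection R (i • e) q) := by
  have hanti : i • e * g = -(g * i • e) := by
    rw [smul_mul_assoc, hg, smul_neg, mul_smul_comm]
  have hpotential : g * e * (e * q * e) = i • (g * q * i • e) := by
    calc
      g * e * (e * q * e) = g * (e * e) * q * e := by simp only [mul_assoc]
      _ = -(g * q * e) := by rw [he, mul_neg_one, neg_mul, neg_mul]
      _ = i • (g * q * i • e) := by rw [mul_smul_comm, smul_smul, hi, neg_smul, one_smul]
  rw [hpotential, map_smul, peirceReflection_mul_mul (smul_mul_smul_self_eq_one hi he) hanti]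

end PeirceReflection

section Laplacian

variable {x : Fin 3 → ℝ}

theorem lap_eq_sum_iteratedFDeriv {g : (Fin 3 → ℝ) → ℂ} (hg : ContDiffAt ℝ 2 g x) :
    lap g x = ∑ k, iteratedFDeriv ℝ 2 g x fun _ => Pi.single k 1 := by
  have hdiff : DifferentiableAt ℝ (fderiv ℝ g) x :=
    (hg.fderiv_right (m := 1) le_rfl).differentiableAt one_ne_zero
  have pd_pd (k : Fin 3) : pd k (pd k g) x = iteratedFDeriv ℝ 2 g x fun _ => Pi.single k 1 := by
    rw [iteratedFDeriv_two_apply]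
    unfold pd
    rw [fderiv_clm_apply hdiff (differentiableAt_const _)]
    simp
  simp only [lap, pd_pd, Fin.sum_univ_three]

theorem lap_clm_comp {ι : Type*} [Fintype ι] (L : (ι → ℂ) →L[ℝ] ℂ) {f : (Fin 3 → ℝ) → ι → ℂ}
    (hf : ContDiffAt ℝ 2 f x) :
    lap (L ∘ f) x = L fun i => lap (fun y => f y i) x := by
  have lap_comp (M : (ι → ℂ) →L[ℝ] ℂ) :
      lap (M ∘ f) x = M (∑ k, iteratedFDeriv ℝ 2 f x fun _ => Pi.single k 1) := by
    rw [lap_eq_sum_iteratedFDeriv (hf.continuousLinearMap_comp M), map_sum]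
    exact Finset.sum_congr rfl fun k _ =>
      congrArg (· fun _ => Pi.single k 1) (M.iteratedFDeriv_comp_left hf le_rfl)
  rw [lap_comp]
  congr 1
  ext i
  exact (lap_comp (ContinuousLinearMap.proj i)).symm

theorem lapq_linearMap_apply (T : HC →ₗ[ℝ] HC) {f : (Fin 3 → ℝ) → HC} {Ω : Set (Fin 3 → ℝ)}
    (hf : QC2On f Ω) (hΩ : Ω ∈ nhds x) :
    lapq (fun y => T (f y)) x = T (lapq f x) := by
  let coords : HC ≃ₗ[ℝ] (Fin 4 → ℂ) :=
    (QuaternionAlgebra.linearEquivTuple (-1 : ℂ) 0 (-1)).restrictScalars ℝ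
  have hcoords : ContDiffAt ℝ 2 (fun y => coords (f y)) x := by
    obtain ⟨hre, hI, hJ, hK⟩ := hf
    rw [contDiffAt_pi]
    intro i
    fin_cases i
    exacts [hre.contDiffAt hΩ, hI.contDiffAt hΩ, hJ.contDiffAt hΩ, hK.contDiffAt hΩ]
  have lapq_coords : coords.symm (fun i => lap (fun y => coords (f y) i) x) = lapq f x := rfl
  have lap_coord (i : Fin 4) :
      lap (fun y => coords (T (f y)) i) x = coords (T (lapq f x)) i := by
    let L : (Fin 4 → ℂ) →L[ℝ] ℂ :=
      (LinearMap.proj i ∘ₗ coords.toLinearMap ∘ₗ T ∘ₗ coords.symm.toLinearMap).toContinuousLinearMap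
    simpa [L, lapq_coords, Function.comp_def] using lap_clm_comp L hcoords
  ext
  exacts [lap_coord 0, lap_coord 1, lap_coord 2, lap_coord 3]

end Laplacian

@[simp]
theorem e1_components : e1.re = 0 ∧ e1.imI = 1 ∧ e1.imJ = 0 ∧ e1.imK = 0 := ⟨rfl, rfl, rfl, rfl⟩

@[simp]
theorem e2_components : e2.re = 0 ∧ e2.imI = 0 ∧ e2.imJ = 1 ∧ e2.imK = 0 := ⟨rfl, rfl, rfl, rfl⟩

@[simp]
theorem e3_components : e3.re = 0 ∧ e3.imI = 0 ∧ e3.imJ = 0 ∧ e3.imK = 1 := ⟨rfl, rfl, rfl, rfl⟩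

@[simp]
theorem quat_components (a b c d : ℂ) :
    (quat a b c d).re = a ∧ (quat a b c d).imI = b ∧ (quat a b c d).imJ = c ∧
      (quat a b c d).imK = d :=
  ⟨rfl, rfl, rfl, rfl⟩

theorem e1_mul_e1 : e1 * e1 = -1 := by
  calc
    e1 * e1 = ((-1 : ℂ) : HC) := by ext <;> simp [-Quaternion.coe_neg]
    _ = -1 := by rw [Quaternion.coe_neg, Quaternion.coe_one]

theorem e1_mul_quat (b c : ℂ) : e1 * quat 0 0 b c = -(quat 0 0 b c * e1) := by
  ext <;> simp

theorem quat_mul_e1 (b c : ℂ) :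
    quat 0 0 b c * e1 = e2 * (b : HC) * e1 + e3 * (c : HC) * e1 := by
  ext <;> simp

theorem PiOp_eq_peirceReflection (q : HC) :
    PiOp q = peirceReflection ℂ (Complex.I • e1) q := by
  simp only [PiOp, peirceReflection_smul_apply Complex.I_mul_I, invOf_eq_inv,
    Quaternion.coe_mul_eq_smul]

theorem PiOp_involutive : Function.Involutive PiOp := by
  simpa only [Function.Involutive, PiOp_eq_peirceReflection] using
    peirceReflection_involutive (smul_mul_smul_self_eq_one Complex.I_mul_I e1_mul_e1)

theorem PiOp_potential (b c : ℂ) (q : HC) :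
    PiOp ((e2 * (b : HC) * e1 + e3 * (c : HC) * e1) * (e1 * q * e1)) =
      (Complex.I : HC) * (quat 0 0 b c * PiOp q) := by
  rw [← quat_mul_e1, Quaternion.coe_mul_eq_smul, PiOp_eq_peirceReflection, PiOp_eq_peirceReflection]
  exact peirceReflection_potential Complex.I_mul_I e1_mul_e1 (e1_mul_quat b c) q

theorem PiOp_schrodinger (l q : HC) (s b c : ℂ) :
    PiOp (-l - (s : HC) * q +
        (e2 * (b : HC) * e1 + e3 * (c : HC) * e1) * (e1 * q * e1)) =
      -PiOp l - (s : HC) * PiOp q + (Complex.I : HC) * (quat 0 0 b c * PiOp q) := by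
  rw [← PiOp_potential]
  simp only [PiOp_eq_peirceReflection, Quaternion.coe_mul_eq_smul, map_add, map_sub, map_neg,
    map_smul]

theorem lapq_PiOp {u : (Fin 3 → ℝ) → HC} {Ω : Set (Fin 3 → ℝ)} {x : Fin 3 → ℝ}
    (hu : QC2On u Ω) (hΩ : Ω ∈ nhds x) :
    lapq (fun y => PiOp (u y)) x = PiOp (lapq u x) := by
  simp only [PiOp_eq_peirceReflection]
  exact lapq_linearMap_apply ((peirceReflection ℂ _).restrictScalars ℝ) hu hΩ

theorem PiOp_eq_zero_iff {q : HC} : PiOp q = 0 ↔ q = 0 := by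
  have PiOp_zero : PiOp 0 = 0 := by rw [PiOp_eq_peirceReflection, map_zero]
  exact ⟨fun h => PiOp_involutive.injective (h.trans PiOp_zero.symm), fun h => h ▸ PiOp_zero⟩

theorem pi_involution_correspondence_general
    (Ω : Set (Fin 3 → ℝ)) (hΩ : IsOpen Ω) (s b c : (Fin 3 → ℝ) → ℂ)
    (u : (Fin 3 → ℝ) → HC) (hu : QC2On u Ω) :
    (∀ q : HC, PiOp (PiOp q) = q) ∧
    ((∀ x ∈ Ω,
        -lapq u x - (s x : HC) * u x +
          (e2 * (b x : HC) * e1 + e3 * (c x : HC) * e1) * (e1 * u x * e1) = 0) ↔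
     (∀ x ∈ Ω,
        -lapq (fun y => PiOp (u y)) x - (s x : HC) * PiOp (u x) +
          (Complex.I : HC) * (quat 0 0 (b x) (c x) * PiOp (u x)) = 0)) := by
  refine ⟨PiOp_involutive, forall₂_congr fun x hx => ?_⟩
  rw [lapq_PiOp hu (hΩ.mem_nhds hx), ← PiOp_schrodinger, PiOp_eq_zero_iff]

/-- Remark of Subsection 4.2: when `α₁` does not depend on `x₁`,
the involution `Π` gives a one-to-one correspondence between solutions of equation (ABC),
`−Δu − α²u + (Dα)e₁ue₁ = 0`, and of the Schrödinger equation with quaternionic potential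
(ABC+1), `−Δv − α²v + i(∇α₁)v = 0`. -/
theorem pi_involution_correspondence
    (Ω : Set (Fin 3 → ℝ)) (hΩ : IsOpen Ω)
    (a1 : (Fin 3 → ℝ) → ℂ) (ha1 : ContDiffOn ℝ 1 a1 Ω)
    (ha1x1 : ∀ x ∈ Ω, pd 0 a1 x = 0)
    (a2 a3 : ℂ)
    (u : (Fin 3 → ℝ) → HC) (hu : QC2On u Ω) :
    -- (i) Π is an involution
    (∀ q : HC, PiOp (PiOp q) = q) ∧
    -- (ii) u solves (ABC) iff v = Πu solves (ABC+1)
    ((∀ x ∈ Ω,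
        -lapq u x - ((-(a1 x ^ 2 + a2 ^ 2 + a3 ^ 2) : ℂ) : HC) * u x +
          (e2 * ((pd 1 a1 x : ℂ) : HC) * e1 + e3 * ((pd 2 a1 x : ℂ) : HC) * e1) *
            (e1 * u x * e1) = 0) ↔
     (∀ x ∈ Ω,
        -lapq (fun y => PiOp (u y)) x -
          ((-(a1 x ^ 2 + a2 ^ 2 + a3 ^ 2) : ℂ) : HC) * PiOp (u x) +
          (Complex.I : HC) * (quat 0 0 (pd 1 a1 x) (pd 2 a1 x) * PiOp (u x)) = 0)) :=
  pi_involution_correspondence_general Ω hΩ (fun x => -(a1 x ^ 2 + a2 ^ 2 + a3 ^ 2))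
    (pd 1 a1) (pd 2 a1) u hu
end
end
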